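/- The characteristic polynomial of the braid arrangement 𝒜_n satisfies χ(𝒜_n, t) = (t−1)(t−2)⋯(t−(n−1)) for all n ≥ 1 and all t ∈ ℝ. -/

import Mathlib

open Finset MeasureTheory

noncomputable section

namespace CharElts

/-- Ambient Euclidean space `ℝ^n`. -/
abbrev V (n : ℕ) := EuclideanSpace ℝ (Fin n)

/-- An affine functional on `ℝ^n`; a hyperplane is its zero set. -/
abbrev AffForm (n : ℕ) := V n →ᵃ[ℝ] ℝ

/-- The hyperplane determined by an affine functional. -/
def hypSet {n : ℕ} (ℓ : AffForm n) : Set (V n) := {x | ℓ x = 0}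

variable {n : ℕ} (𝒜 : Finset (AffForm n))

/-- Index type for the hyperplanes of the arrangement. -/
abbrev Idx := {ℓ : AffForm n // ℓ ∈ 𝒜}

/-- The (possibly empty) set cut out by a sign vector `σ`. -/
def faceSet (σ : Idx 𝒜 → SignType) : Set (V n) :=
  {x | ∀ ℓ : Idx 𝒜, SignType.sign (ℓ.1 x) = σ ℓ}

/-- A face of the arrangement: a sign vector whose face set is nonempty. -/
@[ext] structure Face where
  sgn : Idx 𝒜 → SignType
  nonempty : (faceSet 𝒜 sgn).Nonempty

open Classical in
instance : Fintype (Face 𝒜) :=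
  Fintype.ofInjective Face.sgn (fun F G h => by cases F; cases G; simpa using h)

/-- The underlying point set of a face. -/
def Face.carrier (F : Face 𝒜) : Set (V n) := faceSet 𝒜 F.sgn

/-- A flat: a nonempty intersection of some subcollection of the hyperplanes
(the empty intersection gives all of `ℝ^n`). -/
def IsFlat (X : Set (V n)) : Prop :=
  X.Nonempty ∧ ∃ P : Idx 𝒜 → Prop, X = ⋂ ℓ ∈ {ℓ : Idx 𝒜 | P ℓ}, hypSet ℓ.1

/-- The poset of flats, ordered by inclusion. -/
def Flat := {X : Set (V n) // IsFlat 𝒜 X}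

instance : PartialOrder (Flat 𝒜) :=
  inferInstanceAs (PartialOrder {X : Set (V n) // IsFlat 𝒜 X})

lemma flat_eq_inter (X : Flat 𝒜) :
    X.1 = ⋂ ℓ ∈ {ℓ : Idx 𝒜 | X.1 ⊆ hypSet ℓ.1}, hypSet ℓ.1 := by
  obtain ⟨Z, hne, P, rfl⟩ := X
  apply subset_antisymm
  · intro x hx
    simp only [Set.mem_iInter, Set.mem_setOf_eq]
    intro ℓ hℓ
    exact hℓ hx
  · intro x hx
    simp only [Set.mem_iInter, Set.mem_setOf_eq] at hx ⊢
    intro ℓ hℓ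
    refine hx ℓ ?_
    intro y hy
    simp only [Set.mem_iInter, Set.mem_setOf_eq] at hy
    exact hy ℓ hℓ

open Classical in
instance : Fintype (Flat 𝒜) :=
  Fintype.ofInjective (fun X : Flat 𝒜 => {ℓ : Idx 𝒜 | X.1 ⊆ hypSet ℓ.1}) <| by
    intro X Y h
    dsimp only at h
    apply Subtype.ext
    rw [flat_eq_inter 𝒜 X, flat_eq_inter 𝒜 Y, h]

/-- The top flat: the whole ambient space. -/
def topFlat : Flat 𝒜 :=
  ⟨Set.univ, ⟨⟨0, trivial⟩, fun _ => False, by simp⟩⟩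

/-- The support of a face: the intersection of the hyperplanes on which it lies. -/
def supp (F : Face 𝒜) : Flat 𝒜 :=
  ⟨⋂ ℓ ∈ {ℓ : Idx 𝒜 | F.sgn ℓ = 0}, hypSet ℓ.1, by
    constructor
    · obtain ⟨x, hx⟩ := F.nonempty
      refine ⟨x, ?_⟩
      simp only [Set.mem_iInter, Set.mem_setOf_eq]
      intro ℓ hℓ
      have h0 := hx ℓ
      rw [hℓ] at h0
      simpa [hypSet, sign_eq_zero_iff] using h0
    · exact ⟨fun ℓ => F.sgn ℓ = 0, rfl⟩⟩

/-- The dimension of (the affine hull of) a subset of `ℝ^n`. -/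
def dimS (X : Set (V n)) : ℕ := Module.finrank ℝ (vectorSpan ℝ X)

open Classical in
/-- An element `w = Σ_F w^F H_F` of the Tits algebra (recorded by its coefficient
vector) is *characteristic of parameter `t`* if for every flat `X`, the sum of the
coefficients of the faces with support contained in `X` equals `t ^ rk X`,
where `rk X = dim X - d` and `d` is the common dimension of the minimal flats. -/
def IsCharacteristic (d : ℕ) (w : Face 𝒜 → ℝ) (t : ℝ) : Prop :=
  ∀ X : Flat 𝒜,
    (∑ F : Face 𝒜, if (supp 𝒜 F).1 ⊆ X.1 then w F else 0) = t ^ (dimS X.1 - d)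

/-- The sign vector of the Tits product `FG` of two faces. -/
def combineSgn {I : Type*} (σ τ : I → SignType) : I → SignType :=
  fun ℓ => if σ ℓ = 0 then τ ℓ else σ ℓ

open Classical in
/-- The product of the Tits algebra, on coefficient vectors:
`(u·v)^C = Σ_{F,G : FG = C} u^F v^G`, extending `H_F · H_G = H_{FG}` bilinearly. -/
def mulT (u v : Face 𝒜 → ℝ) : Face 𝒜 → ℝ :=
  fun C => ∑ F : Face 𝒜, ∑ G : Face 𝒜,
    if combineSgn F.sgn G.sgn = C.sgn then u F * v G else 0

open Classical in
/-- The basis element `H_F` of the Tits algebra, as a coefficient vector. -/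
def unitV (F : Face 𝒜) : Face 𝒜 → ℝ := fun G => if G = F then 1 else 0

/-- A chamber: a face whose sign vector is nowhere zero. -/
def IsChamber (F : Face 𝒜) : Prop := ∀ ℓ : Idx 𝒜, F.sgn ℓ ≠ 0

open Classical in
/-- `IsMoebius 𝒜 μ` states that `μ` is the Möbius function of the poset of
flats of `𝒜` (these conditions determine `μ` uniquely). -/
def IsMoebius (μ : Flat 𝒜 → Flat 𝒜 → ℝ) : Prop :=
  (∀ X, μ X X = 1) ∧
  (∀ X Y : Flat 𝒜, X < Y →
    (∑ Z : Flat 𝒜, if X ≤ Z ∧ Z ≤ Y then μ X Z else 0) = 0) ∧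
  (∀ X Y : Flat 𝒜, ¬ X ≤ Y → μ X Y = 0)

open Classical in
/-- `χ(𝒜^X, t) = Σ_{Y ≤ X} μ(Y, X) t^{rk Y}`: the characteristic polynomial of the
arrangement under the flat `X`.  Taking `X = ⊤` gives the characteristic
polynomial of `𝒜` itself. -/
def charPolyUnder (μ : Flat 𝒜 → Flat 𝒜 → ℝ) (d : ℕ) (X : Flat 𝒜) (t : ℝ) : ℝ :=
  ∑ Y : Flat 𝒜, if Y ≤ X then μ Y X * t ^ (dimS Y.1 - d) else 0

/-- The space of directions `L = ⋂_{H ∈ 𝒜} dir(H)`: the intersection of the kernels of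
the linear parts of the defining functionals. -/
def dirL : Submodule ℝ (V n) := ⨅ ℓ : Idx 𝒜, LinearMap.ker ℓ.1.linear

/-- A face is essentially bounded if its image in `ℝ^n / L` is bounded. -/
def EssBounded (F : Face 𝒜) : Prop :=
  Bornology.IsBounded ((dirL 𝒜).mkQ '' F.carrier)

/-- A hyperplane (zero set of a nonconstant affine functional) is nonempty. -/
lemma hyp_nonempty (ℓ : AffForm n) (h : ℓ.linear ≠ 0) : (hypSet ℓ).Nonempty := by
  obtain ⟨v, hv⟩ : ∃ v, ℓ.linear v ≠ 0 := by
    by_contra hc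
    push_neg at hc
    exact h (LinearMap.ext fun v => hc v)
  refine ⟨((-ℓ 0) / (ℓ.linear v)) • v, ?_⟩
  have hdecomp : ℓ (((-ℓ 0) / (ℓ.linear v)) • v)
      = ℓ.linear (((-ℓ 0) / (ℓ.linear v)) • v) + ℓ 0 := by
    conv_lhs => rw [show ((-ℓ 0) / (ℓ.linear v)) • v = ((-ℓ 0) / (ℓ.linear v)) • v +ᵥ (0 : V n)
      from (add_zero _).symm]
    rw [AffineMap.map_vadd]
    rfl
  show ℓ _ = 0
  rw [hdecomp, LinearMap.map_smul, smul_eq_mul, div_mul_cancel₀ _ hv, neg_add_cancel]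

/-- The affine functional `x ↦ x i - x j` of a diagonal hyperplane `x_i = x_j`. -/
def diffForm (n : ℕ) (i j : Fin n) : AffForm n where
  toFun := fun x => x i - x j
  linear :=
    { toFun := fun x => x i - x j
      map_add' := fun x y => by
        simp only [PiLp.add_apply]
        ring
      map_smul' := fun c x => by
        simp only [PiLp.smul_apply, smul_eq_mul, RingHom.id_apply]
        ring }
  map_vadd' := fun p v => by
    simp only [vadd_eq_add, PiLp.add_apply, LinearMap.coe_mk, AddHom.coe_mk]
    ring

open Classical in
/-- The braid arrangement in `ℝ^n`: the hyperplanes `x_i = x_j` for `1 ≤ i < j ≤ n`. -/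
def braid (n : ℕ) : Finset (AffForm n) :=
  ((univ : Finset (Fin n × Fin n)).filter fun p => p.1 < p.2).image
    fun p => diffForm n p.1 p.2

/-!
Counting colourings replaces Möbius function computations. The flats of the braid arrangement
correspond to the set partitions `s` of the coordinates, the dimension being the number of blocks.
Send a colouring `f` of the coordinates with `q` colours to the flat of the partition into colour
classes. The colourings sent below the flat of `s` are those constant on the blocks of `s`, so there
are `q ^ dim` of them. By Möbius inversion `∑ Y, μ(Y, ⊤) q ^ dim Y` counts the colourings sent to
`⊤`, that is, the injective ones: `q (q - 1) ⋯ (q - n + 1)` many. Being true for all natural numbers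
`q`, this is an identity of polynomials, and dividing it by the indeterminate passes from dimensions
to ranks.
-/

section MoebiusInversion

lemma sum_mu_mul_card_le_eq_card_eq (R : Type*) {α C : Type*} [Ring R] [PartialOrder α] [Fintype α]
    [LocallyFiniteOrder α] [DecidableEq α] [DecidableLE α] [Finite C] (φ : C → α) (a : α) :
    ∑ b with b ≤ a, IncidenceAlgebra.mu R b a * (Nat.card {c // φ c ≤ b} : R) =
      Nat.card {c // φ c = a} := by
  have := Fintype.ofFinite C
  simp only [Nat.card_eq_fintype_card, Fintype.card_subtype, ← sum_boole, mul_sum, mul_ite,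
    mul_one, mul_zero]
  rw [sum_comm]
  refine sum_congr rfl fun c _ => ?_
  rw [← sum_filter, filter_filter, ← IncidenceAlgebra.sum_Icc_mu_left]
  congr 1
  ext b
  simp [and_comm]

open Classical in
instance : LocallyFiniteOrder (Flat 𝒜) := Fintype.toLocallyFiniteOrder

variable {𝒜} {μ : Flat 𝒜 → Flat 𝒜 → ℝ}

open Classical in
lemma IsMoebius.sum_Icc_right (hμ : IsMoebius 𝒜 μ) {X Y : Flat 𝒜} (hXY : X ≤ Y) :
    ∑ Z ∈ Icc X Y, μ X Z = if X = Y then 1 else 0 := by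
  obtain rfl | h_ne := eq_or_ne X Y
  · simpa using hμ.1 X
  · rw [if_neg h_ne, ← hμ.2.1 X Y (lt_of_le_of_ne hXY h_ne), ← sum_filter]
    exact sum_congr (by ext; simp) fun _ _ => rfl

open Classical in
lemma IsMoebius.eq_mu (hμ : IsMoebius 𝒜 μ) (X Y : Flat 𝒜) :
    μ X Y = IncidenceAlgebra.mu ℝ X Y := by
  let M : IncidenceAlgebra ℝ (Flat 𝒜) := ⟨μ, hμ.2.2⟩
  have h_mul_zeta : M * IncidenceAlgebra.zeta ℝ = 1 := by
    ext A B hAB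
    rw [IncidenceAlgebra.mul_apply, IncidenceAlgebra.one_apply, ← hμ.sum_Icc_right hAB]
    refine sum_congr rfl fun Z hZ => ?_
    rw [IncidenceAlgebra.zeta_of_le (mem_Icc.1 hZ).2, mul_one]
    rfl
  have h_eq : M = IncidenceAlgebra.mu ℝ :=
    left_inv_eq_right_inv h_mul_zeta IncidenceAlgebra.zeta_mul_mu
  exact congrArg (fun f : IncidenceAlgebra ℝ (Flat 𝒜) => f X Y) h_eq

open Classical in
lemma IsMoebius.charPolyUnder_zero_natCast (hμ : IsMoebius 𝒜 μ) {C : Type*} [Finite C]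
    (φ : C → Flat 𝒜) (X : Flat 𝒜) (q : ℕ)
    (hφ : ∀ Y ≤ X, Nat.card {c // φ c ≤ Y} = q ^ dimS Y.1) :
    charPolyUnder 𝒜 μ 0 X q = Nat.card {c // φ c = X} := by
  rw [← sum_mu_mul_card_le_eq_card_eq, charPolyUnder, sum_filter]
  refine sum_congr rfl fun Y _ => ?_
  split_ifs with hY
  · rw [hμ.eq_mu, hφ Y hY, Nat.cast_pow, Nat.sub_zero]
  · rfl

end MoebiusInversion

section CharPoly

open Polynomial

variable {𝒜}

open Classical in
/-- The characteristic polynomial of the arrangement under the flat `X`, as a formal polynomial with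
values `charPolyUnder 𝒜 μ d X t`. The subtraction in the exponent is truncated, so `d` is meant to
be a lower bound for the dimensions of the flats; `d = 0` weights a flat by its dimension instead
of its rank. -/
def charPoly (μ : Flat 𝒜 → Flat 𝒜 → ℝ) (d : ℕ) (X : Flat 𝒜) : ℝ[X] :=
  ∑ Y with Y ≤ X, C (μ Y X) * Polynomial.X ^ (dimS Y.1 - d)

lemma eval_charPoly (μ : Flat 𝒜 → Flat 𝒜 → ℝ) (d : ℕ) (X : Flat 𝒜) (t : ℝ) :
    (charPoly μ d X).eval t = charPolyUnder 𝒜 μ d X t := by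
  rw [charPolyUnder, ← sum_filter]
  simp [charPoly, eval_finsetSum]

lemma X_pow_mul_charPoly (μ : Flat 𝒜 → Flat 𝒜 → ℝ) {d : ℕ} {X : Flat 𝒜}
    (hd : ∀ Y ≤ X, d ≤ dimS Y.1) :
    Polynomial.X ^ d * charPoly μ d X = charPoly μ 0 X := by
  classical
  rw [charPoly, charPoly, mul_sum]
  refine sum_congr rfl fun Y hY => ?_
  rw [mul_left_comm, ← pow_add, Nat.add_sub_cancel' (hd Y (mem_filter.1 hY).2), Nat.sub_zero]

lemma eq_of_forall_eval_natCast_eq {R : Type*} [CommRing R] [IsDomain R] [CharZero R]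
    {p q : R[X]} (h : ∀ m : ℕ, p.eval (m : R) = q.eval (m : R)) : p = q :=
  eq_of_infinite_eval_eq p q <|
    (Set.infinite_range_of_injective (Nat.cast_injective (R := R))).mono <| by
      rintro _ ⟨m, rfl⟩
      exact h m

end CharPoly

section Partitions

variable {ι : Type*}

/-- The submodule of functions that are constant on the blocks of the set partition `s`, encoded as
the functions factoring through the set of blocks. It models the flats of the braid arrangement. -/
def blockConstants (R : Type*) [Semiring R] (s : Setoid ι) : Submodule R (ι → R) :=
  LinearMap.range (LinearMap.funLeft R R (Quotient.mk s))

variable {R : Type*} [Semiring R] {s t : Setoid ι}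

lemma mem_blockConstants {x : ι → R} : x ∈ blockConstants R s ↔ s ≤ Setoid.ker x := by
  constructor
  · rintro ⟨g, rfl⟩ i j hij
    exact congrArg g (Quotient.sound hij)
  · exact fun h => ⟨Quotient.lift x fun _ _ hij => h hij, rfl⟩

lemma blockConstants_le_blockConstants [Nontrivial R] :
    blockConstants R s ≤ blockConstants R t ↔ t ≤ s := by
  classical
  refine ⟨fun h i j hij => ?_,
    fun h x hx => mem_blockConstants.2 (h.trans (mem_blockConstants.1 hx))⟩
  let indicator : ι → R := fun k => if s i k then 1 else 0
  have h_indicator : indicator ∈ blockConstants R s :=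
    mem_blockConstants.2 fun _ _ hab =>
      if_congr ⟨(s.trans · hab), (s.trans · (s.symm hab))⟩ rfl rfl
  have h_eq : indicator i = indicator j := mem_blockConstants.1 (h h_indicator) hij
  by_contra hs
  simp [indicator, hs] at h_eq

lemma finrank_blockConstants [StrongRankCondition R] [Finite (Quotient s)] :
    Module.finrank R (blockConstants R s) = Nat.card (Quotient s) := by
  have := Fintype.ofFinite (Quotient s)
  rw [blockConstants, LinearMap.finrank_range_of_inj
    (LinearMap.funLeft_injective_of_surjective R R _ Quotient.mk_surjective),
    Module.finrank_fintype_fun_eq_card, Nat.card_eq_fintype_card]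

lemma card_le_ker (s : Setoid ι) [Finite (Quotient s)] (C : Type*) :
    Nat.card {f : ι → C // s ≤ Setoid.ker f} = Nat.card C ^ Nat.card (Quotient s) := by
  rw [Nat.card_congr s.liftEquiv, Nat.card_fun]

lemma card_ker_eq_bot (ι C : Type*) [Finite ι] [Finite C] :
    Nat.card {f : ι → C // Setoid.ker f = ⊥} = (Nat.card C).descFactorial (Nat.card ι) := by
  have := Fintype.ofFinite ι
  have := Fintype.ofFinite C
  simp only [← Setoid.injective_iff_ker_bot]
  rw [Nat.card_congr (Equiv.subtypeInjectiveEquivEmbedding ι C)]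
  simp only [Nat.card_eq_fintype_card, Fintype.card_embedding_eq]

end Partitions

section BraidFlats

lemma mem_hypSet_diffForm {i j : Fin n} {x : V n} : x ∈ hypSet (diffForm n i j) ↔ x i = x j :=
  sub_eq_zero

lemma mem_braid {ℓ : AffForm n} : ℓ ∈ braid n ↔ ∃ i j, i < j ∧ diffForm n i j = ℓ := by
  simp [braid]

lemma isFlat_setOf_le_ker (s : Setoid (Fin n)) :
    IsFlat (braid n) {x | s ≤ Setoid.ker x.ofLp} := by
  refine ⟨⟨0, fun _ _ _ => rfl⟩, fun ℓ => ∃ i j, s i j ∧ diffForm n i j = ℓ.1, ?_⟩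
  ext x
  simp only [Set.mem_ofPred_eq, Set.mem_iInter]
  constructor
  · rintro h ℓ ⟨i, j, hij, hℓ⟩
    rw [← hℓ]
    exact mem_hypSet_diffForm.2 (h hij)
  · intro h i j hij
    have h_lt {i j : Fin n} (hlt : i < j) (hs : s i j) : x i = x j :=
      mem_hypSet_diffForm.1 (h ⟨_, mem_braid.2 ⟨_, _, hlt, rfl⟩⟩ ⟨_, _, hs, rfl⟩)
    obtain hlt | rfl | hgt := lt_trichotomy i j
    · exact h_lt hlt hij
    · rfl
    · exact (h_lt hgt (s.symm hij)).symm

/-- The flat of the braid arrangement attached to a set partition `s` of the coordinates: the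
points satisfying `x i = x j` whenever `i` and `j` lie in the same block. -/
def partitionFlat (s : Setoid (Fin n)) : Flat (braid n) :=
  ⟨{x | s ≤ Setoid.ker x.ofLp}, isFlat_setOf_le_ker s⟩

lemma coe_partitionFlat (s : Setoid (Fin n)) :
    (partitionFlat s).1 =
      (blockConstants ℝ s).comap (WithLp.linearEquiv 2 ℝ (Fin n → ℝ)).toLinearMap := by
  ext x
  exact mem_blockConstants.symm

lemma partitionFlat_le_partitionFlat {s t : Setoid (Fin n)} :
    partitionFlat s ≤ partitionFlat t ↔ t ≤ s := by
  rw [← blockConstants_le_blockConstants (R := ℝ)]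
  change (partitionFlat s).1 ⊆ (partitionFlat t).1 ↔ _
  rw [coe_partitionFlat, coe_partitionFlat, SetLike.coe_subset_coe]
  exact (Submodule.orderIsoMapComap (WithLp.linearEquiv 2 ℝ (Fin n → ℝ))).symm.le_iff_le

lemma partitionFlat_injective : Function.Injective (partitionFlat (n := n)) := fun _ _ h =>
  le_antisymm (partitionFlat_le_partitionFlat.1 h.ge) (partitionFlat_le_partitionFlat.1 h.le)

lemma partitionFlat_surjective : Function.Surjective (partitionFlat (n := n)) := by
  intro X
  let s : Setoid (Fin n) := sInf ((fun x : V n => Setoid.ker x.ofLp) '' X.1)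
  have h_iff {i j : Fin n} : s i j ↔ ∀ x ∈ X.1, x i = x j := Set.forall_mem_image
  refine ⟨s, Subtype.ext (subset_antisymm ?_ ?_)⟩
  · intro x hx
    rw [flat_eq_inter]
    simp only [Set.mem_iInter]
    rintro ⟨ℓ, hℓ⟩ hX
    obtain ⟨i, j, -, rfl⟩ := mem_braid.1 hℓ
    have hs : s i j := h_iff.2 fun y hy => mem_hypSet_diffForm.1 (hX hy)
    exact mem_hypSet_diffForm.2 (hx hs)
  · exact fun x hx _ _ hs => h_iff.1 hs x hx

lemma partitionFlat_bot : partitionFlat (⊥ : Setoid (Fin n)) = topFlat (braid n) :=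
  Subtype.ext (Set.eq_univ_of_forall fun _ => bot_le (α := Setoid (Fin n)))

lemma dimS_coe_submodule (S : Submodule ℝ (V n)) : dimS (S : Set (V n)) = Module.finrank ℝ S :=
  congrArg (fun W : Submodule ℝ (V n) => Module.finrank ℝ W) S.toAffineSubspace_direction

lemma dimS_partitionFlat (s : Setoid (Fin n)) :
    dimS (partitionFlat s).1 = Nat.card (Quotient s) := by
  rw [coe_partitionFlat, dimS_coe_submodule,
    (LinearEquiv.ofSubmodule' (WithLp.linearEquiv 2 ℝ (Fin n → ℝ)) _).finrank_eq,
    finrank_blockConstants]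

lemma one_le_dimS_flat_braid (hn : 1 ≤ n) (X : Flat (braid n)) : 1 ≤ dimS X.1 := by
  obtain ⟨s, rfl⟩ := partitionFlat_surjective X
  have : Nonempty (Quotient s) := ⟨Quotient.mk s ⟨0, hn⟩⟩
  rw [dimS_partitionFlat]
  exact Nat.card_pos

end BraidFlats

lemma card_partitionFlat_ker_le (X : Flat (braid n)) (q : ℕ) :
    Nat.card {f : Fin n → Fin q // partitionFlat (Setoid.ker f) ≤ X} = q ^ dimS X.1 := by
  obtain ⟨s, rfl⟩ := partitionFlat_surjective X
  simp only [partitionFlat_le_partitionFlat]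
  rw [card_le_ker, Nat.card_fin, dimS_partitionFlat]

lemma card_partitionFlat_ker_eq_top (n q : ℕ) :
    Nat.card {f : Fin n → Fin q // partitionFlat (Setoid.ker f) = topFlat (braid n)} =
      q.descFactorial n := by
  simp only [← partitionFlat_bot, partitionFlat_injective.eq_iff]
  rw [card_ker_eq_bot, Nat.card_fin, Nat.card_fin]

lemma charPoly_braid_zero {μ : Flat (braid n) → Flat (braid n) → ℝ} (hμ : IsMoebius (braid n) μ) :
    charPoly μ 0 (topFlat (braid n)) = descPochhammer ℝ n := by
  refine eq_of_forall_eval_natCast_eq fun q => ?_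
  rw [eval_charPoly, descPochhammer_eval_eq_descFactorial, ← card_partitionFlat_ker_eq_top]
  exact hμ.charPolyUnder_zero_natCast _ _ q fun X _ => card_partitionFlat_ker_le X q

/-- The characteristic polynomial of the braid arrangement:
`χ(𝒜_n, t) = (t-1)(t-2)⋯(t-(n-1))`  (here `d = 1`). -/
theorem braid_charPoly (n : ℕ) (hn : 1 ≤ n)
    (μ : Flat (braid n) → Flat (braid n) → ℝ) (hμ : IsMoebius (braid n) μ) (t : ℝ) :
    charPolyUnder (braid n) μ 1 (topFlat (braid n)) t
      = ∏ i ∈ Finset.range (n - 1), (t - (i + 1)) := by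
  obtain ⟨m, rfl⟩ := Nat.exists_eq_add_of_le' hn
  have h_charPoly : charPoly μ 1 (topFlat (braid (m + 1))) =
      (descPochhammer ℝ m).comp (Polynomial.X - 1) := by
    refine mul_left_cancel₀ (Polynomial.X_ne_zero (R := ℝ)) ?_
    rw [← descPochhammer_succ_left, ← charPoly_braid_zero hμ,
      ← X_pow_mul_charPoly μ fun X _ => one_le_dimS_flat_braid hn X, pow_one]
  rw [← eval_charPoly, h_charPoly, Polynomial.eval_comp, descPochhammer_eval_eq_prod_range]
  simp [sub_sub, add_comm]

end CharElts
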